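/- Let r ≥ 1 and n_1, …, n_r > 1 be integers, let R = ℤ_{n_1} ⊕ ⋯ ⊕ ℤ_{n_r}, let S_R be the multiplicative monoid of R, and let U(S_R) = Rˣ be its group of units. Let δ = #{i ∈ [1,r] : 2 ∣ n_i}. Then D(S_R) ≤ D(U(S_R)) + δ. -/

import Mathlib

/-- The Davenport constant of a finite commutative monoid `S`: the least positive
integer `ℓ` such that every multiset of `ℓ` elements of `S` has a proper sub-multiset
(possibly empty) whose product equals the product of the whole multiset. -/
noncomputable def DavenportM (S : Type*) [CommMonoid S] : ℕ :=
  sInf {ℓ : ℕ | 0 < ℓ ∧ ∀ T : Multiset S, Multiset.card T = ℓ →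
    ∃ T' : Multiset S, T' < T ∧ T'.prod = T.prod}

/-- The Davenport constant of a finite abelian group `G`: the least positive integer `ℓ`
such that every multiset of `ℓ` elements of `G` has a nonempty sub-multiset with
product equal to the identity. -/
noncomputable def DavenportG (G : Type*) [CommGroup G] : ℕ :=
  sInf {ℓ : ℕ | 0 < ℓ ∧ ∀ T : Multiset G, Multiset.card T = ℓ →
    ∃ T' : Multiset G, T' ≤ T ∧ T' ≠ 0 ∧ T'.prod = 1}

/-- If multiplication by `w` preserves the additive order of `x` in `ZMod n`, then it acts on `x`
as multiplication by a unit. -/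
theorem ZMod.exists_unit_mul_eq {n : ℕ} [NeZero n] (x w : ZMod n)
    (h : addOrderOf (x * w) = addOrderOf x) : ∃ u : (ZMod n)ˣ, x * w = x * u := by
  have hsmul : ∀ y : ZMod n, x * y = y.val • x := fun y => by
    rw [nsmul_eq_mul, ZMod.natCast_zmod_val, mul_comm]
  have hd : addOrderOf x ∣ n := by
    simpa using addOrderOf_dvd_natCard x
  have hpos : 0 < addOrderOf x := addOrderOf_pos x
  rw [hsmul w, addOrderOf_nsmul] at h
  have hg : Nat.gcd (addOrderOf x) w.val = 1 := by
    rcases Nat.div_eq_self.1 h with h | h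
    · omega
    · exact h
  obtain ⟨u, hu⟩ := ZMod.unitsMap_surjective hd
    (ZMod.unitOfCoprime w.val (Nat.coprime_comm.1 hg))
  refine ⟨u, ?_⟩
  rw [hsmul, hsmul, nsmul_eq_nsmul_iff_modEq, ← ZMod.natCast_eq_natCast_iff]
  have hu' := congrArg Units.val hu
  rw [ZMod.unitsMap_val, ZMod.coe_unitOfCoprime] at hu'
  rw [← hu', ZMod.natCast_val]

/-- If `y` has strictly smaller additive order than its divisor `x` in `ZMod n` and every unit
fixing `y` fixes `x`, then the additive order of `x` is even and that of `y` is odd. -/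
theorem ZMod.even_addOrderOf_of_stabilizer_le {n : ℕ} [NeZero n] (x w : ZMod n)
    (hne : addOrderOf (x * w) ≠ addOrderOf x)
    (hstab : ∀ u : (ZMod n)ˣ, x * w * u = x * w → x * u = x) :
    Even (addOrderOf x) ∧ ¬ Even (addOrderOf (x * w)) := by
  have hsmul : ∀ z y : ZMod n, z * y = y.val • z := fun z y => by
    rw [nsmul_eq_mul, ZMod.natCast_zmod_val, mul_comm]
  have hfix : ∀ (z : ZMod n) (hz : addOrderOf z ∣ n) (u : (ZMod n)ˣ),
      z * u = z ↔ ZMod.unitsMap hz u = 1 := fun z hz u => by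
    rw [hsmul, Units.ext_iff, ZMod.unitsMap_val, Units.val_one]
    nth_rewrite 2 [← one_nsmul z]
    rw [nsmul_eq_nsmul_iff_modEq, ← ZMod.natCast_eq_natCast_iff, ZMod.natCast_val, Nat.cast_one]
  have hd : addOrderOf x ∣ n := by simpa using addOrderOf_dvd_natCard x
  have he : addOrderOf (x * w) ∣ n := by simpa using addOrderOf_dvd_natCard (x * w)
  have hed : addOrderOf (x * w) ∣ addOrderOf x := by
    rw [hsmul x w]; exact addOrderOf_smul_dvd w.val
  have hdpos : 0 < addOrderOf x := addOrderOf_pos x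
  have hepos : 0 < addOrderOf (x * w) := addOrderOf_pos _
  have hinj : Function.Injective (ZMod.unitsMap hed) := by
    rw [injective_iff_map_eq_one]
    intro v hv
    obtain ⟨u, rfl⟩ := ZMod.unitsMap_surjective hd v
    rw [← hfix x hd]
    refine hstab u ((hfix _ he u).2 ?_)
    rw [← hv, ← ZMod.unitsMap_comp hed hd, MonoidHom.comp_apply]
  have : NeZero (addOrderOf x) := ⟨hdpos.ne'⟩
  have : NeZero (addOrderOf (x * w)) := ⟨hepos.ne'⟩
  have hcard := Fintype.card_of_bijective ⟨hinj, ZMod.unitsMap_surjective hed⟩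
  rw [ZMod.card_units_eq_totient, ZMod.card_units_eq_totient] at hcard
  refine ⟨?_, fun heven => hne (heven.eq_of_totient_eq_totient hed hcard.symm)⟩
  rcases Nat.eq_or_eq_of_totient_eq_totient hed hcard.symm with h | h
  · exact absurd h hne
  · exact h ▸ even_two_mul _

/-- Every sub-multiset of an image is the image of a sub-multiset. -/
theorem Multiset.exists_le_map_eq_of_le_map {α β : Type*} {f : α → β} {s : Multiset α}
    {t : Multiset β} (h : t ≤ s.map f) : ∃ s' ≤ s, s'.map f = t := by
  induction s, t using Quotient.inductionOn₂ with
  | _ l m =>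
    obtain ⟨m', hperm, hsub⟩ := h
    obtain ⟨l', hl', rfl⟩ := List.sublist_map_iff.1 hsub
    exact ⟨l', hl'.subperm, Quotient.sound hperm⟩

/-- The Davenport constant of a finite abelian group has its defining property. -/
theorem davenportG_spec (G : Type*) [CommGroup G] [Finite G] :
    0 < DavenportG G ∧ ∀ T : Multiset G, Multiset.card T = DavenportG G →
      ∃ T' : Multiset G, T' ≤ T ∧ T' ≠ 0 ∧ T'.prod = 1 := by
  classical
  have := Fintype.ofFinite G
  refine Nat.sInf_mem (s := {ℓ : ℕ | 0 < ℓ ∧ ∀ T : Multiset G, Multiset.card T = ℓ →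
    ∃ T' : Multiset G, T' ≤ T ∧ T' ≠ 0 ∧ T'.prod = 1})
    ⟨Fintype.card G * Fintype.card G, mul_pos Fintype.card_pos Fintype.card_pos, fun T hT => ?_⟩
  obtain ⟨g, -, hg⟩ : ∃ g ∈ (Finset.univ : Finset G), Fintype.card G ≤ T.count g := by
    refine Finset.exists_le_of_sum_le (f := fun _ => Fintype.card G)
      Finset.univ_nonempty ?_
    rw [Multiset.sum_count_eq_card (fun _ _ => Finset.mem_univ _), hT]
    simp
  refine ⟨Multiset.replicate (Fintype.card G) g, Multiset.le_count_iff_replicate_le.1 hg, ?_, ?_⟩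
  · rw [Ne, ← Multiset.card_eq_zero, Multiset.card_replicate]
    exact Fintype.card_ne_zero
  · rw [Multiset.prod_replicate, pow_card_eq_one]

/-- A multiset at least as long as the Davenport constant has a nonempty sub-multiset with
product `1`. -/
theorem exists_le_prod_eq_one_of_davenportG_le {G : Type*} [CommGroup G] [Finite G]
    (T : Multiset G) (hT : DavenportG G ≤ Multiset.card T) :
    ∃ T' : Multiset G, T' ≤ T ∧ T' ≠ 0 ∧ T'.prod = 1 := by
  obtain ⟨T₀, hT₀⟩ : ∃ T₀, T₀ ∈ Multiset.powersetCard (DavenportG G) T := by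
    rw [← Multiset.card_pos_iff_exists_mem, Multiset.card_powersetCard]
    exact Nat.choose_pos hT
  obtain ⟨hle, hcard⟩ := Multiset.mem_powersetCard.1 hT₀
  obtain ⟨T', h', h⟩ := (davenportG_spec G).2 T₀ hcard
  exact ⟨T', h'.trans hle, h⟩

/-- `L` is a zero-sum free multiset of units fixing `x`. If multiplying `x` successively by the
members of `Q` either acts as a unit, or enlarges the stabilizer, or lowers `c`, then a sufficiently
long `Q` can be shortened without changing its product with `x`. -/
theorem exists_lt_mul_prod_eq {R : Type*} [CommMonoid R] [Finite Rˣ] (c : R → ℕ)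
    (hmono : ∀ x t : R, c (x * t) ≤ c x)
    (hstep : ∀ x t : R, (∃ u : Rˣ, x * t = x * u) ∨
      (∃ v : Rˣ, x * t * v = x * t ∧ x * v ≠ x) ∨ c (x * t) < c x)
    (Q : Multiset R) (x : R) (L : Multiset Rˣ) (hfix : ∀ g ∈ L, x * (g : R) = x)
    (hfree : ∀ A ≤ L, A.prod = 1 → A = 0)
    (hcard : DavenportG Rˣ + c x ≤ Multiset.card L + Multiset.card Q) :
    ∃ Q' < Q, x * Q'.prod = x * Q.prod := by
  classical
  induction hk : Multiset.card Q using Nat.strong_induction_on generalizing Q x L with | _ k ih =>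
  subst hk
  have hfixprod : ∀ A ≤ L, x * (A.prod : Rˣ) = x := fun A hA =>
    Multiset.prod_induction (fun g : Rˣ => x * (g : R) = x) A
      (fun a b ha hb => by rw [Units.val_mul, ← mul_assoc, ha, hb]) (by simp)
      (fun g hg => hfix g (Multiset.mem_of_le hA hg))
  by_cases hall : ∀ t ∈ Q, ∃ u : Rˣ, x * t = x * u
  · have hex : ∀ t, ∃ u : Rˣ, t ∈ Q → x * t = x * u := fun t => by
      by_cases ht : t ∈ Q
      · obtain ⟨u, hu⟩ := hall t ht
        exact ⟨u, fun _ => hu⟩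
      · exact ⟨1, fun h => absurd h ht⟩
    choose u hu using hex
    obtain ⟨C, hC, hC0, hC1⟩ := exists_le_prod_eq_one_of_davenportG_le (L + Q.map u)
      (by rw [Multiset.card_add, Multiset.card_map]; omega)
    obtain ⟨A, hA, B, hB, rfl⟩ : ∃ A ≤ L, ∃ B ≤ Q.map u, A + B = C :=
      ⟨C ∩ L, Multiset.inter_le_right, C - L, tsub_le_iff_left.2 hC, by
        rw [add_comm]; exact Multiset.sub_add_inter C L⟩
    obtain ⟨Q₀, hQ₀, rfl⟩ := Multiset.exists_le_map_eq_of_le_map hB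
    have hact : ∀ S : Multiset R, S ≤ Q → x * S.prod = x * ((S.map u).prod : Rˣ) := by
      intro S
      induction S using Multiset.induction with
      | empty => simp
      | cons a S ihS =>
        intro hS
        have hxa := hu a (Multiset.mem_of_le hS (Multiset.mem_cons_self a S))
        have hxS := ihS ((Multiset.le_cons_self S a).trans hS)
        rw [Multiset.prod_cons, Multiset.map_cons, Multiset.prod_cons, Units.val_mul,
          ← mul_assoc, hxa, mul_right_comm, hxS]
        ac_rfl
    have hQ₀ne : Q₀ ≠ 0 := by
      rintro rfl
      simp only [Multiset.map_zero, add_zero] at hC0 hC1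
      exact hC0 (hfree A hA hC1)
    have hQ₀x : x * Q₀.prod = x := by
      rw [hact Q₀ hQ₀]
      nth_rewrite 1 [← hfixprod A hA]
      rw [mul_assoc, ← Units.val_mul, ← Multiset.prod_add, hC1, Units.val_one, mul_one]
    obtain ⟨Q', rfl⟩ := Multiset.le_iff_exists_add.1 hQ₀
    refine ⟨Q', ?_, by rw [Multiset.prod_add, ← mul_assoc, hQ₀x]⟩
    exact lt_add_of_pos_left Q' (pos_iff_ne_zero.2 hQ₀ne)
  · push Not at hall
    obtain ⟨t, ht, hnot⟩ := hall
    obtain ⟨Q₁, rfl⟩ := Multiset.exists_cons_of_mem ht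
    obtain ⟨L', hL'fix, hL'free, hL'card⟩ : ∃ L' : Multiset Rˣ,
        (∀ g ∈ L', x * t * (g : R) = x * t) ∧ (∀ A ≤ L', A.prod = 1 → A = 0) ∧
        DavenportG Rˣ + c (x * t) ≤ Multiset.card L' + Multiset.card Q₁ := by
      have hLfix : ∀ g ∈ L, x * t * (g : R) = x * t := fun g hg => by
        rw [mul_right_comm, hfix g hg]
      rw [Multiset.card_cons] at hcard
      rcases hstep x t with ⟨u, hu⟩ | ⟨v, hv, hvx⟩ | hlt
      · exact absurd hu (hnot u)
      · refine ⟨v ::ₘ L, ?_, fun A hA hA1 => ?_, ?_⟩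
        · simpa using ⟨hv, hLfix⟩
        · by_cases hvA : v ∈ A
          · obtain ⟨A₁, rfl⟩ := Multiset.exists_cons_of_mem hvA
            have hA₁ := hfixprod A₁ ((Multiset.cons_le_cons_iff v).1 hA)
            rw [Multiset.prod_cons] at hA1
            refine absurd ?_ hvx
            nth_rewrite 1 [← hA₁]
            rw [mul_assoc, ← Units.val_mul, mul_comm _ v, hA1, Units.val_one, mul_one]
          · exact hfree A ((Multiset.le_cons_of_notMem hvA).1 hA) hA1
        · have := hmono x t
          rw [Multiset.card_cons]; omega
      · exact ⟨L, hLfix, hfree, by omega⟩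
    obtain ⟨Q', hlt, h⟩ := ih _ (by simp) Q₁ (x * t) L' hL'fix hL'free hL'card rfl
    refine ⟨t ::ₘ Q', (Multiset.cons_lt_cons_iff).2 hlt, ?_⟩
    rw [Multiset.prod_cons, Multiset.prod_cons, ← mul_assoc, h, mul_assoc]

/-- The Davenport constant of a commutative monoid exceeds that of its unit group by at most the
value at `1` of any function that drops at every non-associate multiplication that does not
enlarge the unit stabilizer. -/
theorem davenportM_le_davenportG_units_add {R : Type*} [CommMonoid R] [Finite Rˣ] (c : R → ℕ)
    (hmono : ∀ x t : R, c (x * t) ≤ c x)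
    (hstep : ∀ x t : R, (∃ u : Rˣ, x * t = x * u) ∨
      (∃ v : Rˣ, x * t * v = x * t ∧ x * v ≠ x) ∨ c (x * t) < c x) :
    DavenportM R ≤ DavenportG Rˣ + c 1 := by
  refine Nat.sInf_le ⟨Nat.add_pos_left (davenportG_spec Rˣ).1 _, fun T hT => ?_⟩
  obtain ⟨T', hlt, h⟩ := exists_lt_mul_prod_eq c hmono hstep T 1 0 (by simp)
    (fun A hA _ => Multiset.le_zero.1 hA) (by simp [hT])
  exact ⟨T', hlt, by simpa using h⟩

theorem davenport_le_units_add_delta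
    (r : ℕ) (hr : 1 ≤ r) (n : Fin r → ℕ) (hn : ∀ i, 1 < n i) :
    DavenportM ((i : Fin r) → ZMod (n i))
      ≤ DavenportG ((i : Fin r) → ZMod (n i))ˣ
        + (Finset.univ.filter fun i : Fin r => 2 ∣ n i).card := by
  have hne : ∀ i, NeZero (n i) := fun i => ⟨by have := hn i; omega⟩
  have hdvd : ∀ (x t : (i : Fin r) → ZMod (n i)) (i : Fin r),
      addOrderOf ((x * t) i) ∣ addOrderOf (x i) := fun x t i => by
    have : (x * t) i = (t i).val • x i := by
      rw [nsmul_eq_mul, ZMod.natCast_zmod_val, mul_comm, Pi.mul_apply]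
    rw [this]
    exact addOrderOf_smul_dvd _
  have hsub : ∀ x t : (i : Fin r) → ZMod (n i),
      (Finset.univ.filter fun i => Even (addOrderOf ((x * t) i))) ⊆
        Finset.univ.filter fun i => Even (addOrderOf (x i)) := fun x t =>
    Finset.monotone_filter_right _ fun i _ hi =>
      even_iff_two_dvd.2 ((even_iff_two_dvd.1 hi).trans (hdvd x t i))
  have key := davenportM_le_davenportG_units_add
    (fun x : (i : Fin r) → ZMod (n i) =>
      (Finset.univ.filter fun i => Even (addOrderOf (x i))).card)
    (fun x t => Finset.card_le_card (hsub x t)) (fun x t => ?_)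
  · simpa [ZMod.addOrderOf_one, even_iff_two_dvd] using key
  by_cases hord : ∀ i, addOrderOf (x i * t i) = addOrderOf (x i)
  · choose u hu using fun i => ZMod.exists_unit_mul_eq (x i) (t i) (hord i)
    exact Or.inl ⟨MulEquiv.piUnits.symm u, funext hu⟩
  refine Or.inr ?_
  push Not at hord
  obtain ⟨i, hi⟩ := hord
  by_cases hstab : ∀ u : (ZMod (n i))ˣ, x i * t i * u = x i * t i → x i * u = x i
  · obtain ⟨heven, hodd⟩ := ZMod.even_addOrderOf_of_stabilizer_le (x i) (t i) hi hstab
    refine Or.inr (Finset.card_lt_card ((Finset.ssubset_iff_of_subset (hsub x t)).2 ⟨i, ?_, ?_⟩))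
    · simpa using heven
    · simpa using hodd
  · push Not at hstab
    obtain ⟨u, hu, hux⟩ := hstab
    refine Or.inl ⟨MulEquiv.piUnits.symm (Pi.mulSingle i u), funext fun j => ?_, fun h => hux ?_⟩
    · change x j * t j * ((Pi.mulSingle i u : (j : Fin r) → (ZMod (n j))ˣ) j : ZMod (n j)) = _
      by_cases hj : j = i
      · subst hj
        simpa using hu
      · simp [Pi.mulSingle_eq_of_ne hj]
    · have := congrFun h i
      change x i * ((Pi.mulSingle i u : (j : Fin r) → (ZMod (n j))ˣ) i : ZMod (n i)) = _ at this
      simpa using this
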